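/- Let A be a finite-dimensional left Leibniz algebra over a field F and let B and C be subspaces of A. Define B^1 = B and B^{n+1} = B·B^n (the span of all products b·x with b ∈ B, x ∈ B^n). Then for every n ≥ 1, f(B^n, C) ⊆ f^n(B, C). -/

import Mathlib

open Submodule

section LeibnizDefs

variable {F : Type*} {A : Type*} [Field F] [AddCommGroup A] [Module F A]

/-- The span of all products `b*c` with `b ∈ B`, `c ∈ C`. -/
def mulSub (mul : A →ₗ[F] A →ₗ[F] A) (B C : Submodule F A) : Submodule F A :=
  Submodule.span F {z : A | ∃ b ∈ B, ∃ c ∈ C, mul b c = z}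

/-- `fSub mul B C = B·C + C·B`, the function `f(B,C)`. -/
def fSub (mul : A →ₗ[F] A →ₗ[F] A) (B C : Submodule F A) : Submodule F A :=
  mulSub mul B C ⊔ mulSub mul C B

/-- `fIter mul B C n = f^{n+1}(B,C)` (so index `0` is `f^1(B,C) = f(B,C)`). -/
def fIter (mul : A →ₗ[F] A →ₗ[F] A) (B C : Submodule F A) : ℕ → Submodule F A
  | 0 => fSub mul B C
  | n + 1 => fSub mul B (fIter mul B C n)

/-- `lcs mul B n = B^{n+1}`, the lower central series (index `0` is `B^1 = B`). -/
def lcs (mul : A →ₗ[F] A →ₗ[F] A) (B : Submodule F A) : ℕ → Submodule F A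
  | 0 => B
  | n + 1 => mulSub mul B (lcs mul B n)

/-- `ds mul B n = B^{(n+1)}`, the derived series (index `0` is `B^{(1)} = B`). -/
def ds (mul : A →ₗ[F] A →ₗ[F] A) (B : Submodule F A) : ℕ → Submodule F A
  | 0 => B
  | n + 1 => mulSub mul (ds mul B n) (ds mul B n)

/-- `B^ω = ⋂_{i ≥ 1} B^i`. -/
def omegaSub (mul : A →ₗ[F] A →ₗ[F] A) (B : Submodule F A) : Submodule F A :=
  ⨅ n, lcs mul B n

/-- `B` is a subalgebra: a subspace closed under multiplication. -/
def IsSubalg (mul : A →ₗ[F] A →ₗ[F] A) (B : Submodule F A) : Prop :=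
  ∀ x ∈ B, ∀ y ∈ B, mul x y ∈ B

/-- `I` is an ideal of the subalgebra `S`: `I ⊆ S` and `xI + Ix ⊆ I` for all `x ∈ S`. -/
def IsIdealIn (mul : A →ₗ[F] A →ₗ[F] A) (I S : Submodule F A) : Prop :=
  I ≤ S ∧ ∀ x ∈ S, ∀ y ∈ I, mul x y ∈ I ∧ mul y x ∈ I

/-- `B` is subinvariant in `S`: there is a chain of subalgebras
`B = c 0 ⊆ c 1 ⊆ ⋯ ⊆ c t = S` with each term an ideal of the next. -/
def IsSubinvariantIn (mul : A →ₗ[F] A →ₗ[F] A) (B S : Submodule F A) : Prop :=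
  ∃ (t : ℕ) (c : ℕ → Submodule F A), c 0 = B ∧ c t = S ∧
    (∀ i ≤ t, IsSubalg mul (c i)) ∧ ∀ i < t, IsIdealIn mul (c i) (c (i + 1))

/-- `B` is nilpotent: `B^m = 0` for some `m`. -/
def IsNilpotentSub (mul : A →ₗ[F] A →ₗ[F] A) (B : Submodule F A) : Prop :=
  ∃ m, lcs mul B m = ⊥

/-- `B` is solvable: `B^{(m)} = 0` for some `m`. -/
def IsSolvableSub (mul : A →ₗ[F] A →ₗ[F] A) (B : Submodule F A) : Prop :=
  ∃ m, ds mul B m = ⊥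

/-- The centralizer `Z_A(B) = {x : xb = 0 = bx for all b ∈ B}`. -/
def centralizerSet (mul : A →ₗ[F] A →ₗ[F] A) (B : Submodule F A) : Set A :=
  {x : A | ∀ b ∈ B, mul x b = 0 ∧ mul b x = 0}

/-- `R` is the radical (the maximal solvable ideal) of the subalgebra `S`. -/
def IsRadicalIn (mul : A →ₗ[F] A →ₗ[F] A) (S R : Submodule F A) : Prop :=
  IsIdealIn mul R S ∧ IsSolvableSub mul R ∧
    ∀ T, IsIdealIn mul T S → IsSolvableSub mul T → T ≤ R

/-- `N` is the nilradical (the maximal nilpotent ideal) of the subalgebra `S`. -/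
def IsNilradicalIn (mul : A →ₗ[F] A →ₗ[F] A) (S N : Submodule F A) : Prop :=
  IsIdealIn mul N S ∧ IsNilpotentSub mul N ∧
    ∀ T, IsIdealIn mul T S → IsNilpotentSub mul T → T ≤ N

/-- `H` is a Cartan subalgebra: a nilpotent self-normalizing subalgebra. -/
def IsCartan (mul : A →ₗ[F] A →ₗ[F] A) (H : Submodule F A) : Prop :=
  IsSubalg mul H ∧ IsNilpotentSub mul H ∧
    ∀ x : A, (∀ h ∈ H, mul x h ∈ H ∧ mul h x ∈ H) → x ∈ H

/-- The subalgebra generated by a set: the smallest subalgebra containing it. -/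
def subalgGen (mul : A →ₗ[F] A →ₗ[F] A) (s : Set A) : Submodule F A :=
  sInf {S : Submodule F A | IsSubalg mul S ∧ s ⊆ (S : Set A)}

end LeibnizDefs

/-! At the level of subspaces the left Leibniz identity reads `(BX)C ⊆ B(XC) + X(BC)` and
`C(BX) ⊆ (CB)X + B(CX)`, so that `f(BX, C) ⊆ f(B, f(X, C)) + f(X, f(B, C))`. For `X = B^n`,
induction on `n` over all `C` bounds both summands by `f^{n+1}(B, C)`: the first by the induction
hypothesis for `C`, the second by the one for `f(B, C)`. -/

section LeftLeibniz

variable {R M : Type*} [CommRing R] [AddCommGroup M] [Module R M]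

/-- The left Leibniz identity for a bilinear multiplication: every left multiplication `mul x` is a
derivation. -/
def IsLeftLeibniz (mul : M →ₗ[R] M →ₗ[R] M) : Prop :=
  ∀ x y z : M, mul x (mul y z) = mul (mul x y) z + mul y (mul x z)

namespace IsLeftLeibniz

variable {mul : M →ₗ[R] M →ₗ[R] M}

theorem map₂_map₂_left_le (h : IsLeftLeibniz mul) (B X C : Submodule R M) :
    map₂ mul (map₂ mul B X) C ≤ map₂ mul B (map₂ mul X C) ⊔ map₂ mul X (map₂ mul B C) := by
  refine map₂_le.2 fun y hy c hc ↦ ?_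
  suffices map₂ mul B X ≤
      (map₂ mul B (map₂ mul X C) ⊔ map₂ mul X (map₂ mul B C)).comap (mul.flip c) from this hy
  refine map₂_le.2 fun b hb x hx ↦ ?_
  rw [mem_comap, LinearMap.flip_apply, eq_sub_of_add_eq (h b x c).symm]
  exact sub_mem (mem_sup_left (apply_mem_map₂ _ hb (apply_mem_map₂ _ hx hc)))
    (mem_sup_right (apply_mem_map₂ _ hx (apply_mem_map₂ _ hb hc)))

theorem map₂_map₂_right_le (h : IsLeftLeibniz mul) (B X C : Submodule R M) :
    map₂ mul C (map₂ mul B X) ≤ map₂ mul (map₂ mul C B) X ⊔ map₂ mul B (map₂ mul C X) := by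
  refine map₂_le.2 fun c hc y hy ↦ ?_
  suffices map₂ mul B X ≤
      (map₂ mul (map₂ mul C B) X ⊔ map₂ mul B (map₂ mul C X)).comap (mul c) from this hy
  refine map₂_le.2 fun b hb x hx ↦ ?_
  rw [mem_comap, h c b x]
  exact add_mem (mem_sup_left (apply_mem_map₂ _ (apply_mem_map₂ _ hc hb) hx))
    (mem_sup_right (apply_mem_map₂ _ hb (apply_mem_map₂ _ hc hx)))

end IsLeftLeibniz

end LeftLeibniz

section IteratedProducts

variable {F A : Type*} [Field F] [AddCommGroup A] [Module F A] (mul : A →ₗ[F] A →ₗ[F] A)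

theorem mulSub_eq_map₂ (B C : Submodule F A) : mulSub mul B C = map₂ mul B C :=
  (map₂_eq_span_image2 mul B C).symm

theorem mulSub_mono_left {B B' : Submodule F A} (h : B ≤ B') (C : Submodule F A) :
    mulSub mul B C ≤ mulSub mul B' C := by
  simpa only [mulSub_eq_map₂] using map₂_le_map₂_left h

theorem mulSub_mono_right (B : Submodule F A) {C C' : Submodule F A} (h : C ≤ C') :
    mulSub mul B C ≤ mulSub mul B C' := by
  simpa only [mulSub_eq_map₂] using map₂_le_map₂_right h

theorem fSub_mono_right (B : Submodule F A) {C C' : Submodule F A} (h : C ≤ C') :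
    fSub mul B C ≤ fSub mul B C' :=
  sup_le_sup (mulSub_mono_right mul B h) (mulSub_mono_left mul h B)

theorem fIter_fSub (B C : Submodule F A) (n : ℕ) :
    fIter mul B (fSub mul B C) n = fIter mul B C (n + 1) := by
  induction n with
  | zero => rfl
  | succ n ih => exact congrArg (fSub mul B) ih

variable {mul}

theorem IsLeftLeibniz.fSub_mulSub_le (h : IsLeftLeibniz mul) (B X C : Submodule F A) :
    fSub mul (mulSub mul B X) C ≤ fSub mul B (fSub mul X C) ⊔ fSub mul X (fSub mul B C) := by
  have left_le : mulSub mul (mulSub mul B X) C ≤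
      mulSub mul B (mulSub mul X C) ⊔ mulSub mul X (mulSub mul B C) := by
    simpa only [mulSub_eq_map₂] using h.map₂_map₂_left_le B X C
  have right_le : mulSub mul C (mulSub mul B X) ≤
      mulSub mul B (mulSub mul C X) ⊔ mulSub mul (mulSub mul C B) X := by
    simpa only [mulSub_eq_map₂, sup_comm] using h.map₂_map₂_right_le B X C
  refine sup_le (left_le.trans (sup_le_sup ?_ ?_)) (right_le.trans (sup_le_sup ?_ ?_))
  · exact (mulSub_mono_right mul B le_sup_left).trans le_sup_left
  · exact (mulSub_mono_right mul X le_sup_left).trans le_sup_left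
  · exact (mulSub_mono_right mul B le_sup_right).trans le_sup_left
  · exact (mulSub_mono_left mul le_sup_right X).trans le_sup_right

theorem stmt_0_general (h : IsLeftLeibniz mul) (B C : Submodule F A) (n : ℕ) :
    fSub mul (lcs mul B n) C ≤ fIter mul B C n := by
  induction n generalizing C with
  | zero => exact le_rfl
  | succ n ih =>
    calc fSub mul (lcs mul B (n + 1)) C
      _ ≤ fSub mul B (fSub mul (lcs mul B n) C) ⊔ fSub mul (lcs mul B n) (fSub mul B C) :=
        h.fSub_mulSub_le B (lcs mul B n) C
      _ ≤ fSub mul B (fIter mul B C n) ⊔ fIter mul B (fSub mul B C) n :=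
        sup_le_sup (fSub_mono_right mul B (ih C)) (ih (fSub mul B C))
      _ = fIter mul B C (n + 1) := by
        rw [fIter_fSub, fIter, sup_idem]

end IteratedProducts

/-- for every `n ≥ 1`, `f(B^n, C) ⊆ f^n(B, C)`
(here index `n : ℕ` corresponds to the paper's `n + 1 ≥ 1`). -/
theorem stmt_0 {F A : Type*} [Field F] [AddCommGroup A] [Module F A] [FiniteDimensional F A]
    (mul : A →ₗ[F] A →ₗ[F] A)
    (hleib : ∀ x y z : A, mul x (mul y z) = mul (mul x y) z + mul y (mul x z))
    (B C : Submodule F A) (n : ℕ) :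
    fSub mul (lcs mul B n) C ≤ fIter mul B C n :=
  stmt_0_general hleib B C n
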